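/- arXiv:2402.18168 — 2 statements merged into one kernel-verified Lean document; each statement's English description precedes it below -/
import Mathlib

section
/- In the setting of the dgl (L₁, D) built from minimal Quillen models of 2-cones, for every k ≥ 3 and all A₁, …, A_k ∈ 𝕃(V), the iterated bracket of derivations [[[[D, σ_{A₁}], σ_{A₂}] ⋯ ], σ_{A_k}] vanishes on 𝕃(W₀). -/
universe u

/-- A graded Lie algebra over `ℚ`: a `ℤ`-graded vector space with a bilinear bracket
satisfying graded antisymmetry and the graded Jacobi identity on homogeneous elements. -/
structure GLA (Lc : Type u) [AddCommGroup Lc] [Module ℚ Lc] where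
  grade : ℤ → Submodule ℚ Lc
  internal : DirectSum.IsInternal grade
  br : Lc →ₗ[ℚ] Lc →ₗ[ℚ] Lc
  br_mem : ∀ {i j : ℤ} {x y : Lc}, x ∈ grade i → y ∈ grade j → br x y ∈ grade (i + j)
  antisymm : ∀ {i j : ℤ} {x y : Lc}, x ∈ grade i → y ∈ grade j →
      br x y = -((-1 : ℚ) ^ (i * j) • br y x)
  jacobi : ∀ {i j : ℤ} {x y : Lc} (z : Lc), x ∈ grade i → y ∈ grade j →
      br x (br y z) = br (br x y) z + (-1 : ℚ) ^ (i * j) • br y (br x z)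

namespace GLA

variable {Lc : Type u} [AddCommGroup Lc] [Module ℚ Lc]

/-- The Lie subalgebra (as a submodule closed under the bracket) generated by
a graded family of subspaces. -/
def lieSub (G : GLA Lc) (p : ℤ → Submodule ℚ Lc) : Submodule ℚ Lc :=
  sInf {q | (∀ i, p i ≤ q) ∧ ∀ x ∈ q, ∀ y ∈ q, G.br x y ∈ q}

/-- The submodule of decomposable elements of `L`: the span of all brackets. -/
def dec (G : GLA Lc) : Submodule ℚ Lc :=
  Submodule.span ℚ {x : Lc | ∃ a b : Lc, x = G.br a b}

/-- A graded Lie algebra is reduced if it vanishes in degrees `≤ 0`. -/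
def Reduced (G : GLA Lc) : Prop := ∀ i : ℤ, i ≤ 0 → G.grade i = ⊥

end GLA


/-- Iterated bracket of derivations: starting from the pair `(D, -1)` (the differential
together with its degree), successively form `([θ, σ_A], d + |A| + 1)` where
`[θ, σ_A] = θ ∘ σ_A - (-1)^{d(|A|+1)} σ_A ∘ θ` for the entries `(|A|, A)` of the list. -/
def iterBr {Lc : Type u} [AddCommGroup Lc] [Module ℚ Lc]
    (sg : ℤ → Lc → (Lc →ₗ[ℚ] Lc)) (D : Lc →ₗ[ℚ] Lc) (l : List (ℤ × Lc)) :
    (Lc →ₗ[ℚ] Lc) × ℤ :=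
  l.foldl
    (fun θd p =>
      (θd.1 ∘ₗ sg p.1 p.2 - ((-1 : ℚ) ^ (θd.2 * (p.1 + 1))) • (sg p.1 p.2 ∘ₗ θd.1),
        θd.2 + p.1 + 1))
    (D, -1)

namespace GLA

variable {Lc : Type u} [AddCommGroup Lc] [Module ℚ Lc]

theorem le_lieSub (G : GLA Lc) (p : ℤ → Submodule ℚ Lc) (i : ℤ) : p i ≤ G.lieSub p := by
  refine le_sInf ?_
  rintro q ⟨h, -⟩
  exact h i

theorem lieSub_mono (G : GLA Lc) {p p' : ℤ → Submodule ℚ Lc} (h : ∀ i, p i ≤ p' i) :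
    G.lieSub p ≤ G.lieSub p' := by
  refine le_sInf ?_
  rintro q ⟨h1, h2⟩
  exact sInf_le ⟨fun i => (h i).trans (h1 i), h2⟩

/-- Induction over homogeneous elements of a generated subalgebra. -/
theorem lieSub_le_of_hom (G : GLA Lc) {p : ℤ → Submodule ℚ Lc} (hp : ∀ i, p i ≤ G.grade i)
    (K : Submodule ℚ Lc) (hK : ∀ i, p i ≤ K)
    (hbr : ∀ {i j : ℤ} {x y : Lc}, x ∈ G.grade i → y ∈ G.grade j → x ∈ K → y ∈ K →
      G.br x y ∈ K) : G.lieSub p ≤ K := by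
  have h1 : G.lieSub p ≤ ⨆ n, (G.grade n ⊓ K) := by
    refine sInf_le ⟨fun i => (le_inf (hp i) (hK i)).trans (le_iSup (fun n => G.grade n ⊓ K) i), ?_⟩
    intro x hx y hy
    refine Submodule.iSup_induction (fun n => G.grade n ⊓ K)
      (motive := fun x => G.br x y ∈ ⨆ n, (G.grade n ⊓ K)) hx ?_ ?_ ?_
    · intro i x hx
      refine Submodule.iSup_induction (fun n => G.grade n ⊓ K)
        (motive := fun y => G.br x y ∈ ⨆ n, (G.grade n ⊓ K)) hy ?_ ?_ ?_
      · intro j y hy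
        exact (le_iSup (fun n => G.grade n ⊓ K) (i + j))
          ⟨G.br_mem hx.1 hy.1, hbr hx.1 hy.1 hx.2 hy.2⟩
      · simp
      · intro a b ha hb
        rw [map_add]
        exact add_mem ha hb
    · simp
    · intro a b ha hb
      rw [map_add, LinearMap.add_apply]
      exact add_mem ha hb
  exact h1.trans (iSup_le fun n => inf_le_right)

/-- Graded derivations of degree `d`. -/
structure IsDer (G : GLA Lc) (d : ℤ) (θ : Lc →ₗ[ℚ] Lc) : Prop where
  mem : ∀ {n : ℤ} {x : Lc}, x ∈ G.grade n → θ x ∈ G.grade (n + d)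
  der : ∀ {n : ℤ} (x y : Lc), x ∈ G.grade n →
    θ (G.br x y) = G.br (θ x) y + (-1 : ℚ) ^ (d * n) • G.br x (θ y)

theorem sq_sign (n : ℤ) : (-1 : ℚ) ^ n * (-1 : ℚ) ^ n = 1 := by
  rw [← mul_zpow]; simp

theorem IsDer.bracket {G : GLA Lc} {d e : ℤ} {θ τ : Lc →ₗ[ℚ] Lc} (hθ : G.IsDer d θ)
    (hτ : G.IsDer e τ) :
    G.IsDer (d + e) (θ ∘ₗ τ - ((-1 : ℚ) ^ (d * e)) • (τ ∘ₗ θ)) where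
  mem := by
    intro n x hx
    have h1 := hθ.mem (hτ.mem hx)
    have h2 := hτ.mem (hθ.mem hx)
    rw [show n + e + d = n + (d + e) by ring] at h1
    rw [show n + d + e = n + (d + e) by ring] at h2
    exact sub_mem h1 (Submodule.smul_mem _ _ h2)
  der := by
    intro n x y hx
    have hn : (-1 : ℚ) ≠ 0 := by norm_num
    simp only [LinearMap.sub_apply, LinearMap.comp_apply, LinearMap.smul_apply, map_sub, map_smul]
    rw [hτ.der x y hx, hθ.der x y hx]
    simp only [map_add, map_smul]
    rw [hθ.der _ _ (hτ.mem hx), hθ.der _ _ hx, hτ.der _ _ (hθ.mem hx), hτ.der _ _ hx]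
    have e1 : (-1 : ℚ) ^ (d * (n + e)) = (-1 : ℚ) ^ (d * n) * (-1 : ℚ) ^ (d * e) := by
      rw [mul_add, zpow_add₀ hn]
    have e2 : (-1 : ℚ) ^ (e * (n + d)) = (-1 : ℚ) ^ (e * n) * (-1 : ℚ) ^ (d * e) := by
      rw [mul_add, zpow_add₀ hn, mul_comm e d]
    have e3 : (-1 : ℚ) ^ ((d + e) * n) = (-1 : ℚ) ^ (d * n) * (-1 : ℚ) ^ (e * n) := by
      rw [add_mul, zpow_add₀ hn]
    rw [e1, e2, e3]
    have hs := sq_sign (d * e)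
    generalize (-1 : ℚ) ^ (d * e) = s at *
    generalize (-1 : ℚ) ^ (d * n) = a at *
    generalize (-1 : ℚ) ^ (e * n) = b at *
    have h4 : s * (b * s) = b := by linear_combination b * hs
    simp only [smul_add, smul_sub, smul_smul, h4]
    rw [mul_comm s a]
    module

/-- A derivation killing the generators kills the generated subalgebra. -/
theorem IsDer.eq_zero {G : GLA Lc} {d : ℤ} {θ : Lc →ₗ[ℚ] Lc} (hθ : G.IsDer d θ)
    {p : ℤ → Submodule ℚ Lc} (hp : ∀ i, p i ≤ G.grade i)
    (h0 : ∀ {i : ℤ} {x : Lc}, x ∈ p i → θ x = 0) {T : Lc} (hT : T ∈ G.lieSub p) : θ T = 0 := by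
  refine G.lieSub_le_of_hom hp (LinearMap.ker θ) (fun i x hx => h0 hx) ?_ hT
  intro i j x y hx hy h1 h2
  rw [LinearMap.mem_ker] at *
  rw [hθ.der x y hx, h1, h2]
  simp

end GLA

theorem iterBr_snoc {Lc : Type u} [AddCommGroup Lc] [Module ℚ Lc]
    (sg : ℤ → Lc → (Lc →ₗ[ℚ] Lc)) (D : Lc →ₗ[ℚ] Lc) (l : List (ℤ × Lc)) (p : ℤ × Lc) :
    iterBr sg D (l ++ [p]) =
      ((iterBr sg D l).1 ∘ₗ sg p.1 p.2 -
        ((-1 : ℚ) ^ ((iterBr sg D l).2 * (p.1 + 1))) • (sg p.1 p.2 ∘ₗ (iterBr sg D l).1),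
        (iterBr sg D l).2 + p.1 + 1) := by
  simp [iterBr, List.foldl_append]

/-- Lemma 3.10.  In the dgl `(L₁, D)` built from minimal Quillen models
of 2-cones, for every `k ≥ 3` and all homogeneous `A₁, …, A_k ∈ 𝕃(V)`, the iterated
bracket `[[[[D, σ_{A₁}], σ_{A₂}] ⋯ ], σ_{A_k}]` vanishes on `𝕃(W₀)`. -/
theorem statement10
    {Lc : Type u} [AddCommGroup Lc] [Module ℚ Lc] (G : GLA Lc)
    (V0 V1 W0 W1 Sp : ℤ → Submodule ℚ Lc)
    -- the ambient free Lie algebra is reduced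
    (hred : G.Reduced)
    (hV0 : ∀ i, V0 i ≤ G.grade i) (hV1 : ∀ i, V1 i ≤ G.grade i)
    (hW0 : ∀ i, W0 i ≤ G.grade i) (hW1 : ∀ i, W1 i ≤ G.grade i)
    (hSp : ∀ i, Sp i ≤ G.grade i)
    -- the suspension `s(v ⊗ w)`, bilinear, of degree `|v|+|w|+1`; in `L₁` only
    -- `s(V₀⊗W₀) ⊕ s(V₁⊗W₀) ⊕ s(V₀⊗W₁)` is present
    (sus : Lc →ₗ[ℚ] Lc →ₗ[ℚ] Lc)
    (hsus00 : ∀ {i j : ℤ} {v w : Lc}, v ∈ V0 i → w ∈ W0 j → sus v w ∈ Sp (i + j + 1))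
    (hsus10 : ∀ {i j : ℤ} {v w : Lc}, v ∈ V1 i → w ∈ W0 j → sus v w ∈ Sp (i + j + 1))
    (hsus01 : ∀ {i j : ℤ} {v w : Lc}, v ∈ V0 i → w ∈ W1 j → sus v w ∈ Sp (i + j + 1))
    -- `L₁` is generated by `V ⊕ W ⊕ s(V₀⊗W₀) ⊕ s(V₁⊗W₀) ⊕ s(V₀⊗W₁)`
    (hgen : G.lieSub (fun i => V0 i ⊔ V1 i ⊔ W0 i ⊔ W1 i ⊔ Sp i) = ⊤)
    -- the derivations `σ_A` for homogeneous `A ∈ 𝕃(V ⊕ W)`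
    (sg : ℤ → Lc → (Lc →ₗ[ℚ] Lc))
    (hsg_grade : ∀ {a : ℤ} {A : Lc}, A ∈ G.lieSub (fun i => V0 i ⊔ V1 i ⊔ W0 i ⊔ W1 i) →
      A ∈ G.grade a → ∀ {n : ℤ} {x : Lc}, x ∈ G.grade n → sg a A x ∈ G.grade (n + a + 1))
    (hsg_der : ∀ {a : ℤ} {A : Lc}, A ∈ G.lieSub (fun i => V0 i ⊔ V1 i ⊔ W0 i ⊔ W1 i) →
      A ∈ G.grade a → ∀ {n : ℤ} (x y : Lc), x ∈ G.grade n →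
      sg a A (G.br x y) = G.br (sg a A x) y + (-1 : ℚ) ^ ((a + 1) * n) • G.br x (sg a A y))
    (hsg_vw : ∀ {i j : ℤ} {v w : Lc}, v ∈ V0 i ⊔ V1 i → w ∈ W0 j → sg i v w = sus v w)
    (hsg_vw' : ∀ {i j : ℤ} {v w : Lc}, v ∈ V0 i → w ∈ W1 j → sg i v w = sus v w)
    (hsg_wv : ∀ {i j : ℤ} {v w : Lc}, v ∈ V0 i ⊔ V1 i → w ∈ W0 j →
      sg j w v = (-1 : ℚ) ^ (i * j) • sus v w)
    (hsg_wv' : ∀ {i j : ℤ} {v w : Lc}, v ∈ V0 i → w ∈ W1 j →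
      sg j w v = (-1 : ℚ) ^ (i * j) • sus v w)
    (hsg_vv : ∀ {i i' : ℤ} {v v' : Lc}, v ∈ V0 i ⊔ V1 i → v' ∈ V0 i' ⊔ V1 i' →
      sg i v v' = 0)
    (hsg_ww : ∀ {j j' : ℤ} {w w' : Lc}, w ∈ W0 j ⊔ W1 j → w' ∈ W0 j' ⊔ W1 j' →
      sg j w w' = 0)
    (hsg_vS : ∀ {i k : ℤ} {v x : Lc}, v ∈ V0 i ⊔ V1 i → x ∈ Sp k → sg i v x = 0)
    (hsg_wS : ∀ {j k : ℤ} {w x : Lc}, w ∈ W0 j ⊔ W1 j → x ∈ Sp k → sg j w x = 0)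
    (hsg_Av : ∀ {a : ℤ} {A : Lc}, A ∈ G.lieSub (fun i => V0 i ⊔ V1 i ⊔ W0 i ⊔ W1 i) →
      A ∈ G.grade a → ∀ {i : ℤ} {v : Lc}, v ∈ V0 i ⊔ V1 i →
      sg a A v = (-1 : ℚ) ^ (i * a) • sg i v A)
    (hsg_Aw : ∀ {a : ℤ} {A : Lc}, A ∈ G.lieSub (fun i => V0 i ⊔ V1 i ⊔ W0 i ⊔ W1 i) →
      A ∈ G.grade a → ∀ {j : ℤ} {w : Lc}, w ∈ W0 j ⊔ W1 j →
      sg a A w = (-1 : ℚ) ^ (j * a) • sg j w A)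
    (hsg_AS : ∀ {a : ℤ} {A : Lc}, A ∈ G.lieSub (fun i => V0 i ⊔ V1 i ⊔ W0 i ⊔ W1 i) →
      A ∈ G.grade a → ∀ {k : ℤ} {x : Lc}, x ∈ Sp k → sg a A x = 0)
    -- the degree `-1` derivation `D` of `L₁`
    (D : Lc →ₗ[ℚ] Lc)
    (hD_grade : ∀ {i : ℤ} {x : Lc}, x ∈ G.grade i → D x ∈ G.grade (i - 1))
    (hD_der : ∀ {i : ℤ} (x y : Lc), x ∈ G.grade i →
      D (G.br x y) = G.br (D x) y + (-1 : ℚ) ^ ((-1 : ℤ) * i) • G.br x (D y))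
    -- `D = ∂_V` on `V`, `D = ∂_W` on `W`, with `∂(V₀) = ∂(W₀) = 0`,
    -- `∂(V₁) ⊆ 𝕃(V₀)` and `∂(W₁) ⊆ 𝕃(W₀)`
    (hD_V0 : ∀ {i : ℤ} {v : Lc}, v ∈ V0 i → D v = 0)
    (hD_W0 : ∀ {j : ℤ} {w : Lc}, w ∈ W0 j → D w = 0)
    (hD_V1 : ∀ {i : ℤ} {v : Lc}, v ∈ V1 i → D v ∈ G.lieSub V0)
    (hD_W1 : ∀ {j : ℤ} {w : Lc}, w ∈ W1 j → D w ∈ G.lieSub W0)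
    -- minimality of the two Quillen models
    (hD_V1dec : ∀ {i : ℤ} {v : Lc}, v ∈ V1 i → D v ∈ G.dec)
    (hD_W1dec : ∀ {j : ℤ} {w : Lc}, w ∈ W1 j → D w ∈ G.dec)
    -- the value of `D` on the suspension generators
    (hD_sus00 : ∀ {i j : ℤ} {v w : Lc}, v ∈ V0 i → w ∈ W0 j → D (sus v w) = G.br v w)
    (hD_sus10 : ∀ {i j : ℤ} {v w : Lc}, v ∈ V1 i → w ∈ W0 j →
      D (sus v w) = G.br v w - (-1 : ℚ) ^ ((i + 1) * j) • sg j w (D v))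
    (hD_sus01 : ∀ {i j : ℤ} {v w : Lc}, v ∈ V0 i → w ∈ W1 j →
      D (sus v w) = G.br v w - (-1 : ℚ) ^ i • sg i v (D w))
    -- `(L₁, D)` is a dgl
    (hDD : ∀ x : Lc, D (D x) = 0)
 :
    ∀ (l : List (ℤ × Lc)), 3 ≤ l.length →
      (∀ p ∈ l, p.2 ∈ G.lieSub (fun i => V0 i ⊔ V1 i) ∧ p.2 ∈ G.grade p.1) →
      ∀ {T : Lc}, T ∈ G.lieSub W0 → (iterBr sg D l).1 T = 0 := by
  have hVg : ∀ i, V0 i ⊔ V1 i ≤ G.grade i := fun i => sup_le (hV0 i) (hV1 i)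
  have hsub : G.lieSub (fun i => V0 i ⊔ V1 i) ≤
      G.lieSub (fun i => V0 i ⊔ V1 i ⊔ W0 i ⊔ W1 i) :=
    G.lieSub_mono (fun i => le_sup_left.trans le_sup_left)
  have hV0sub : G.lieSub V0 ≤ G.lieSub (fun i => V0 i ⊔ V1 i) :=
    G.lieSub_mono (fun i => le_sup_left)
  have hVin : ∀ {i : ℤ} {v : Lc}, v ∈ V0 i ⊔ V1 i → v ∈ G.lieSub (fun i => V0 i ⊔ V1 i) :=
    fun {i v} hv => G.le_lieSub (fun i => V0 i ⊔ V1 i) i hv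
  have hWin : ∀ {i : ℤ} {w : Lc}, w ∈ W0 i →
      w ∈ G.lieSub (fun i => V0 i ⊔ V1 i ⊔ W0 i ⊔ W1 i) :=
    fun {i w} hw => G.le_lieSub (fun i => V0 i ⊔ V1 i ⊔ W0 i ⊔ W1 i) i
      (Submodule.mem_sup_left (Submodule.mem_sup_right hw))
  have sder : ∀ {a : ℤ} {A : Lc}, A ∈ G.lieSub (fun i => V0 i ⊔ V1 i ⊔ W0 i ⊔ W1 i) →
      A ∈ G.grade a → G.IsDer (a + 1) (sg a A) := by
    intro a A h1 h2
    refine ⟨fun {n x} hx => ?_, fun {n} x y hx => hsg_der h1 h2 x y hx⟩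
    have := hsg_grade h1 h2 hx
    rwa [add_assoc] at this
  have Dder : G.IsDer (-1) D := ⟨fun {n x} hx => hD_grade hx, fun {n} x y hx => hD_der x y hx⟩
  -- the common kernel of all `σ_A`, `A ∈ 𝕃(V)`
  obtain ⟨K, hK⟩ : ∃ K : Submodule ℚ Lc, ∀ x, x ∈ K ↔ ∀ (a : ℤ) (A : Lc),
      A ∈ G.lieSub (fun i => V0 i ⊔ V1 i) → A ∈ G.grade a → sg a A x = 0 := by
    refine ⟨⨅ (a : ℤ) (A : Lc) (_ : A ∈ G.lieSub (fun i => V0 i ⊔ V1 i)) (_ : A ∈ G.grade a),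
      LinearMap.ker (sg a A), fun x => ?_⟩
    simp only [Submodule.mem_iInf, LinearMap.mem_ker]
  -- elements sent to `K` by all `σ_A`
  obtain ⟨N, hN⟩ : ∃ N : Submodule ℚ Lc, ∀ x, x ∈ N ↔ ∀ (a : ℤ) (A : Lc),
      A ∈ G.lieSub (fun i => V0 i ⊔ V1 i) → A ∈ G.grade a → sg a A x ∈ K := by
    refine ⟨⨅ (a : ℤ) (A : Lc) (_ : A ∈ G.lieSub (fun i => V0 i ⊔ V1 i)) (_ : A ∈ G.grade a),
      K.comap (sg a A), fun x => ?_⟩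
    simp only [Submodule.mem_iInf, Submodule.mem_comap]
  have hKN : K ≤ N := by
    intro x hx
    rw [hN]
    intro a A h1 h2
    rw [(hK x).1 hx a A h1 h2]
    exact zero_mem _
  have hKbr : ∀ {i : ℤ} {x y : Lc}, x ∈ G.grade i → x ∈ K → y ∈ K → G.br x y ∈ K := by
    intro i x y hx h1 h2
    rw [hK]
    intro a A hA ha
    rw [(sder (hsub hA) ha).der x y hx, (hK x).1 h1 a A hA ha, (hK y).1 h2 a A hA ha]
    simp
  have hKNbr : ∀ {i : ℤ} {x y : Lc}, x ∈ G.grade i → x ∈ K → y ∈ N → G.br x y ∈ N := by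
    intro i x y hx h1 h2
    rw [hN]
    intro a A hA ha
    rw [(sder (hsub hA) ha).der x y hx, (hK x).1 h1 a A hA ha, map_zero, LinearMap.zero_apply,
      zero_add]
    exact Submodule.smul_mem _ _ (hKbr hx h1 ((hN y).1 h2 a A hA ha))
  have hNKbr : ∀ {i : ℤ} {x y : Lc}, x ∈ G.grade i → x ∈ N → y ∈ K → G.br x y ∈ N := by
    intro i x y hx h1 h2
    rw [hN]
    intro a A hA ha
    rw [(sder (hsub hA) ha).der x y hx, (hK y).1 h2 a A hA ha, map_zero, smul_zero, add_zero]
    exact hKbr ((sder (hsub hA) ha).mem hx) ((hN x).1 h1 a A hA ha) h2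
  have hVK : ∀ {i : ℤ} {v : Lc}, v ∈ V0 i ⊔ V1 i → v ∈ K := by
    intro i v hv
    rw [hK]
    intro a A hA ha
    rw [hsg_Av (hsub hA) ha hv,
      (sder (hsub (hVin hv)) (hVg i hv)).eq_zero hVg (fun {j x} hx => hsg_vv hv hx) hA, smul_zero]
  have hSK : ∀ {i : ℤ} {x : Lc}, x ∈ Sp i → x ∈ K := by
    intro i x hx
    rw [hK]
    intro a A hA ha
    exact hsg_AS (hsub hA) ha hx
  have hLVK : G.lieSub (fun i => V0 i ⊔ V1 i) ≤ K :=
    G.lieSub_le_of_hom hVg K (fun i v hv => hVK hv) (fun {i j x y} hx _ h1 h2 => hKbr hx h1 h2)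
  have hDLV : ∀ {i : ℤ} {v : Lc}, v ∈ V0 i ⊔ V1 i → D v ∈ G.lieSub V0 := by
    intro i v hv
    obtain ⟨v0, h0, v1, h1, rfl⟩ := Submodule.mem_sup.1 hv
    rw [map_add, hD_V0 h0, zero_add]
    exact hD_V1 h1
  have hDK : G.lieSub (fun i => V0 i ⊔ V1 i) ≤ K ⊓ K.comap D := by
    refine G.lieSub_le_of_hom hVg _
      (fun i v hv => ⟨hVK hv, hLVK (hV0sub (hDLV hv))⟩) ?_
    intro i j x y hx hy h1 h2
    refine ⟨hKbr hx h1.1 h2.1, ?_⟩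
    rw [SetLike.mem_coe, Submodule.mem_comap, Dder.der x y hx]
    exact add_mem (hKbr (Dder.mem hx) h1.2 h2.1)
      (Submodule.smul_mem _ _ (hKbr hx h1.1 h2.2))
  have hwv : ∀ {i j : ℤ} {v w : Lc}, v ∈ V0 i ⊔ V1 i → w ∈ W0 j → sg j w v ∈ K := by
    intro i j v w hv hw
    rw [hsg_wv hv hw]
    refine Submodule.smul_mem _ _ ?_
    obtain ⟨v0, h0, v1, h1, rfl⟩ := Submodule.mem_sup.1 hv
    rw [map_add, LinearMap.add_apply]
    exact add_mem (hSK (hsus00 h0 hw)) (hSK (hsus10 h1 hw))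
  have hwK : ∀ {j : ℤ} {w : Lc}, w ∈ W0 j →
      G.lieSub (fun i => V0 i ⊔ V1 i) ≤ K ⊓ K.comap (sg j w) := by
    intro j w hw
    refine G.lieSub_le_of_hom hVg _ (fun i v hv => ⟨hVK hv, hwv hv hw⟩) ?_
    intro i j' x y hx hy h1 h2
    have hd := sder (hWin hw) (hW0 j hw)
    refine ⟨hKbr hx h1.1 h2.1, ?_⟩
    rw [SetLike.mem_coe, Submodule.mem_comap, hd.der x y hx]
    exact add_mem (hKbr (hd.mem hx) h1.2 h2.1)
      (Submodule.smul_mem _ _ (hKbr hx h1.1 h2.2))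
  have hAw : ∀ {a j : ℤ} {A w : Lc}, A ∈ G.lieSub (fun i => V0 i ⊔ V1 i) → A ∈ G.grade a →
      w ∈ W0 j → sg a A w ∈ K := by
    intro a j A w hA ha hw
    rw [hsg_Aw (hsub hA) ha (Submodule.mem_sup_left hw)]
    exact Submodule.smul_mem _ _ (hwK hw hA).2
  have hWN : ∀ {j : ℤ} {w : Lc}, w ∈ W0 j → w ∈ N := by
    intro j w hw
    rw [hN]
    intro a A hA ha
    exact hAw hA ha hw
  have hDwN : ∀ {j : ℤ} {w : Lc}, w ∈ W0 j → G.lieSub (fun i => V0 i ⊔ V1 i) ≤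
      (K ⊓ K.comap D) ⊓ (K.comap (sg j w) ⊓ N.comap (D ∘ₗ sg j w)) := by
    intro j w hw
    have hd := sder (hWin hw) (hW0 j hw)
    refine G.lieSub_le_of_hom hVg _
      (fun i v hv => ⟨hDK (hVin hv), (hwK hw (hVin hv)).2, ?_⟩) ?_
    · rw [SetLike.mem_coe, Submodule.mem_comap, LinearMap.comp_apply, hsg_wv hv hw, map_smul]
      refine Submodule.smul_mem _ _ ?_
      obtain ⟨v0, h0, v1, h1, rfl⟩ := Submodule.mem_sup.1 hv
      rw [map_add, LinearMap.add_apply, map_add, hD_sus00 h0 hw, hD_sus10 h1 hw]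
      refine add_mem (hKNbr (hV0 i h0) (hVK (Submodule.mem_sup_left h0)) (hWN hw))
        (sub_mem (hKNbr (hV1 i h1) (hVK (Submodule.mem_sup_right h1)) (hWN hw))
          (Submodule.smul_mem _ _ (hKN (hwK hw (hV0sub (hD_V1 h1))).2)))
    · rintro i j' x y hx hy ⟨⟨x1, x2⟩, x3, x4⟩ ⟨⟨y1, y2⟩, y3, y4⟩
      simp only [SetLike.mem_coe, Submodule.mem_comap, LinearMap.comp_apply] at x2 x3 x4 y2 y3 y4
      refine ⟨⟨hKbr hx x1 y1, ?_⟩, ?_, ?_⟩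
      · rw [SetLike.mem_coe, Submodule.mem_comap, Dder.der x y hx]
        exact add_mem (hKbr (Dder.mem hx) x2 y1) (Submodule.smul_mem _ _ (hKbr hx x1 y2))
      · rw [SetLike.mem_coe, Submodule.mem_comap, hd.der x y hx]
        exact add_mem (hKbr (hd.mem hx) x3 y1) (Submodule.smul_mem _ _ (hKbr hx x1 y3))
      · rw [SetLike.mem_coe, Submodule.mem_comap, LinearMap.comp_apply, hd.der x y hx, map_add, map_smul,
          Dder.der _ _ (hd.mem hx), Dder.der _ _ hx]
        refine add_mem (add_mem ?_ (Submodule.smul_mem _ _ ?_))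
          (Submodule.smul_mem _ _ (add_mem ?_ (Submodule.smul_mem _ _ ?_)))
        · exact hNKbr (Dder.mem (hd.mem hx)) x4 y1
        · exact hKN (hKbr (hd.mem hx) x3 y2)
        · exact hKN (hKbr (Dder.mem hx) x2 y3)
        · exact hKNbr hx x1 y4
  -- behaviour of iterated brackets on elements `x ∈ K` with `D x ∈ N`
  have hiterK : ∀ (l : List (ℤ × Lc)),
      (∀ p ∈ l, p.2 ∈ G.lieSub (fun i => V0 i ⊔ V1 i) ∧ p.2 ∈ G.grade p.1) →
      ∀ x ∈ K, D x ∈ N → (iterBr sg D l).1 x ∈ N ∧ (1 ≤ l.length → (iterBr sg D l).1 x ∈ K) ∧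
        (2 ≤ l.length → (iterBr sg D l).1 x = 0) := by
    intro l
    induction l using List.reverseRecOn with
    | nil =>
      intro _ x hx hDx
      exact ⟨hDx, by simp, by simp⟩
    | append_singleton l p ih =>
      intro hl x hx hDx
      obtain ⟨hA, ha⟩ := hl p (by simp)
      obtain ⟨i1, i2, i3⟩ := ih (fun q hq => hl q (by simp [hq])) x hx hDx
      have hx0 := (hK x).1 hx _ _ hA ha
      have key : (iterBr sg D (l ++ [p])).1 x ∈ K := by
        simp only [iterBr_snoc, LinearMap.sub_apply, LinearMap.comp_apply, LinearMap.smul_apply,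
          hx0, map_zero, zero_sub]
        exact neg_mem (Submodule.smul_mem _ _ ((hN _).1 i1 _ _ hA ha))
      refine ⟨hKN key, fun _ => key, fun h2 => ?_⟩
      have h1 : 1 ≤ l.length := by simpa using h2
      simp only [iterBr_snoc, LinearMap.sub_apply, LinearMap.comp_apply, LinearMap.smul_apply,
          hx0, map_zero, zero_sub, (hK _).1 (i2 h1) _ _ hA ha, smul_zero, neg_zero]
  have hiterW : ∀ (l : List (ℤ × Lc)),
      (∀ p ∈ l, p.2 ∈ G.lieSub (fun i => V0 i ⊔ V1 i) ∧ p.2 ∈ G.grade p.1) →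
      ∀ {j : ℤ} {w : Lc}, w ∈ W0 j → (iterBr sg D l).1 w ∈ N ∧
        (2 ≤ l.length → (iterBr sg D l).1 w ∈ K) ∧
        (3 ≤ l.length → (iterBr sg D l).1 w = 0) := by
    intro l
    induction l using List.reverseRecOn with
    | nil =>
      intro _ j w hw
      refine ⟨?_, by simp, by simp⟩
      have : (iterBr sg D []).1 w = 0 := hD_W0 hw
      rw [this]
      exact zero_mem _
    | append_singleton l p ih =>
      intro hl j w hw
      obtain ⟨hA, ha⟩ := hl p (by simp)
      have hl' : ∀ q ∈ l, q.2 ∈ G.lieSub (fun i => V0 i ⊔ V1 i) ∧ q.2 ∈ G.grade q.1 :=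
        fun q hq => hl q (by simp [hq])
      obtain ⟨i1, i2, i3⟩ := ih hl' hw
      have hsK := hAw hA ha hw
      have hDs : D (sg p.1 p.2 w) ∈ N := by
        rw [hsg_Aw (hsub hA) ha (Submodule.mem_sup_left hw), map_smul]
        exact Submodule.smul_mem _ _ (hDwN hw hA).2.2
      obtain ⟨k1, k2, k3⟩ := hiterK l hl' _ hsK hDs
      have e : (iterBr sg D (l ++ [p])).1 w = (iterBr sg D l).1 (sg p.1 p.2 w) -
          ((-1 : ℚ) ^ ((iterBr sg D l).2 * (p.1 + 1))) • sg p.1 p.2 ((iterBr sg D l).1 w) := by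
        simp only [iterBr_snoc, LinearMap.sub_apply, LinearMap.comp_apply, LinearMap.smul_apply]
      rw [e]
      refine ⟨sub_mem k1 (Submodule.smul_mem _ _ (hKN ((hN _).1 i1 _ _ hA ha))),
        fun h => ?_, fun h => ?_⟩
      · have h1 : 1 ≤ l.length := by simpa using h
        exact sub_mem (k2 h1) (Submodule.smul_mem _ _ ((hN _).1 i1 _ _ hA ha))
      · have h1 : 2 ≤ l.length := by simpa using h
        rw [k3 h1, (hK _).1 (i2 h1) _ _ hA ha, smul_zero, sub_zero]
  have hiterD : ∀ (l : List (ℤ × Lc)),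
      (∀ p ∈ l, p.2 ∈ G.lieSub (fun i => V0 i ⊔ V1 i) ∧ p.2 ∈ G.grade p.1) →
      G.IsDer (iterBr sg D l).2 (iterBr sg D l).1 := by
    intro l
    induction l using List.reverseRecOn with
    | nil => exact fun _ => Dder
    | append_singleton l p ih =>
      intro hl
      obtain ⟨hA, ha⟩ := hl p (by simp)
      have := (ih (fun q hq => hl q (by simp [hq]))).bracket (sder (hsub hA) ha)
      rw [iterBr_snoc]
      rwa [← add_assoc] at this
  intro l hlen hl T hT
  exact (hiterD l hl).eq_zero hW0 (fun {i x} hx => (hiterW l hl hx).2.2 hlen) hT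
end

section
/- In the setting of the dgl (L₁, D) built from minimal Quillen models of 2-cones, for all A, B, C ∈ 𝕄(V₀) and T ∈ 𝕃(W₀), the star product of the Jacobiator with T is a boundary of a triple-derivation term: J(A,B,C) ⋆ T = (−1)^{|B|} D(σ_Ā σ_B̄ σ_C̄ (T)), where J(A,B,C) = A(BC) − (AB)C − (−1)^{|A||B|} B(AC) ∈ 𝕄(V₀). -/
universe u

/-- Trees of the free graded linear magma on the graded subspace family `P`
(homogeneous generators and formal binary products). -/
inductive Mag {Lc : Type u} [AddCommGroup Lc] [Module ℚ Lc]
    (P : ℤ → Submodule ℚ Lc) : Type u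
  | of (i : ℤ) (v : Lc) (hv : v ∈ P i) : Mag P
  | mul : Mag P → Mag P → Mag P

namespace Mag

variable {Lc : Type u} [AddCommGroup Lc] [Module ℚ Lc] {P : ℤ → Submodule ℚ Lc}

/-- Degree of a magma element. -/
def deg : Mag P → ℤ
  | of i _ _ => i
  | mul A B => deg A + deg B

/-- The class of a magma element in the (free) graded Lie algebra. -/
def real (G : GLA Lc) : Mag P → Lc
  | of _ v _ => v
  | mul A B => G.br (real G A) (real G B)

/-- The star operator `⋆ : 𝕄(V) ⊗ 𝕃(W) → L`, applied to a homogeneous element `T`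
of degree `t`, defined recursively by `a ⋆ T = 0` for a generator `a` and
`AB ⋆ T = (-1)^{|A|} σ_Ā σ_B̄ (T) + (-1)^{|B||T|} [A ⋆ T, B̄] + [Ā, B ⋆ T]`. -/
def star (G : GLA Lc) (sg : ℤ → Lc → (Lc →ₗ[ℚ] Lc)) (t : ℤ) : Mag P → Lc → Lc
  | of _ _ _, _ => 0
  | mul A B, T =>
      (-1 : ℚ) ^ deg A • sg (deg A) (real G A) (sg (deg B) (real G B) T)
        + (-1 : ℚ) ^ (deg B * t) • G.br (star G sg t A T) (real G B)
        + G.br (real G A) (star G sg t B T)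

end Mag


section Helpers

variable {Lc : Type u} [AddCommGroup Lc] [Module ℚ Lc]

lemma neg_one_zpow_ite (n : ℤ) : (-1 : ℚ) ^ n = if Even n then 1 else -1 := by
  split_ifs with h
  · exact h.neg_one_zpow
  · exact (Int.not_even_iff_odd.mp h).neg_one_zpow

/-- Homogeneous derivations of degree `d`. -/
structure IsDer (G : GLA Lc) (f : Lc →ₗ[ℚ] Lc) (d : ℤ) : Prop where
  mem : ∀ {n : ℤ} {x : Lc}, x ∈ G.grade n → f x ∈ G.grade (n + d)
  der : ∀ {n : ℤ} (x y : Lc), x ∈ G.grade n →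
    f (G.br x y) = G.br (f x) y + (-1 : ℚ) ^ (d * n) • G.br x (f y)

/-- Graded commutator. -/
noncomputable def gcomm (f g : Lc →ₗ[ℚ] Lc) (d e : ℤ) : Lc →ₗ[ℚ] Lc :=
  f ∘ₗ g - (-1 : ℚ) ^ (d * e) • (g ∘ₗ f)

lemma gcomm_apply (f g : Lc →ₗ[ℚ] Lc) (d e : ℤ) (x : Lc) :
    gcomm f g d e x = f (g x) - (-1 : ℚ) ^ (d * e) • g (f x) := rfl

lemma IsDer.comm {G : GLA Lc} {f g : Lc →ₗ[ℚ] Lc} {d e : ℤ}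
    (hf : IsDer G f d) (hg : IsDer G g e) : IsDer G (gcomm f g d e) (d + e) where
  mem := by
    intro n x hx
    rw [gcomm_apply]
    have h1 := hf.mem (hg.mem hx)
    have h2 := hg.mem (hf.mem hx)
    rw [show n + e + d = n + (d + e) by ring] at h1
    rw [show n + d + e = n + (d + e) by ring] at h2
    exact Submodule.sub_mem _ h1 (Submodule.smul_mem _ _ h2)
  der := by
    intro n x y hx
    simp only [gcomm_apply]
    rw [hf.der x y hx, hg.der x y hx]
    simp only [map_add, map_smul, map_sub, LinearMap.sub_apply, LinearMap.smul_apply]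
    rw [hf.der _ y (hg.mem hx), hf.der x _ hx, hg.der _ y (hf.mem hx), hg.der x _ hx]
    simp only [neg_one_zpow_ite]
    by_cases h1 : Even d <;> by_cases h2 : Even e <;> by_cases h3 : Even n <;>
      simp only [Int.even_add, Int.even_mul, h1, h2, h3] <;> simp <;> abel

lemma IsDer.add {G : GLA Lc} {f g : Lc →ₗ[ℚ] Lc} {d : ℤ}
    (hf : IsDer G f d) (hg : IsDer G g d) : IsDer G (f + g) d where
  mem := fun hx => Submodule.add_mem _ (hf.mem hx) (hg.mem hx)
  der := by
    intro n x y hx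
    simp only [LinearMap.add_apply, hf.der x y hx, hg.der x y hx, map_add]
    module

lemma IsDer.smul {G : GLA Lc} {f : Lc →ₗ[ℚ] Lc} {d : ℤ} (c : ℚ)
    (hf : IsDer G f d) : IsDer G (c • f) d where
  mem := fun hx => Submodule.smul_mem _ _ (hf.mem hx)
  der := by
    intro n x y hx
    simp only [LinearMap.smul_apply, hf.der x y hx, map_smul]
    module

lemma isDer_ad (G : GLA Lc) {a : ℤ} {A : Lc} (hA : A ∈ G.grade a) : IsDer G (G.br A) a where
  mem := by
    intro n x hx
    have := G.br_mem hA hx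
    rwa [add_comm] at this
  der := fun x y hx => G.jacobi y hA hx

lemma lieSub_of (G : GLA Lc) {p : ℤ → Submodule ℚ Lc} {i : ℤ} {x : Lc} (hx : x ∈ p i) :
    x ∈ G.lieSub p := by
  rw [GLA.lieSub, Submodule.mem_sInf]
  intro q hq
  exact hq.1 i hx

lemma lieSub_br (G : GLA Lc) {p : ℤ → Submodule ℚ Lc} {x y : Lc}
    (hx : x ∈ G.lieSub p) (hy : y ∈ G.lieSub p) : G.br x y ∈ G.lieSub p := by
  rw [GLA.lieSub, Submodule.mem_sInf] at *
  intro q hq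
  exact hq.2 x (hx q hq) y (hy q hq)

lemma IsDer.zero_lieSub {G : GLA Lc} {f : Lc →ₗ[ℚ] Lc} {d : ℤ} (hf : IsDer G f d)
    {p : ℤ → Submodule ℚ Lc} (hp : ∀ i, p i ≤ G.grade i)
    (h0 : ∀ {i : ℤ} {x : Lc}, x ∈ p i → f x = 0) {x : Lc} (hx : x ∈ G.lieSub p) : f x = 0 := by
  let s : Set Lc := {x | (∃ n, x ∈ G.grade n) ∧ f x = 0}
  have hle : G.lieSub p ≤ Submodule.span ℚ s := by
    apply sInf_le
    refine ⟨fun i x hx => Submodule.subset_span ⟨⟨i, hp i hx⟩, h0 hx⟩, ?_⟩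
    intro x hx y hy
    induction hx using Submodule.span_induction with
    | zero => simp
    | add a b _ _ ha hb => rw [map_add]; exact Submodule.add_mem _ ha hb
    | smul c a _ ha => rw [map_smul]; exact Submodule.smul_mem _ _ ha
    | mem a ha =>
      induction hy using Submodule.span_induction with
      | zero => simp
      | add a b _ _ ha hb => rw [map_add]; exact Submodule.add_mem _ ha hb
      | smul c a _ ha => rw [map_smul]; exact Submodule.smul_mem _ _ ha
      | mem b hb =>
        obtain ⟨⟨n, hn⟩, ha0⟩ := ha
        obtain ⟨⟨m, hm⟩, hb0⟩ := hb
        refine Submodule.subset_span ⟨⟨_, G.br_mem hn hm⟩, ?_⟩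
        rw [hf.der a b hn, ha0, hb0]; simp
  have hs : Submodule.span ℚ s ≤ LinearMap.ker f := by
    rw [Submodule.span_le]
    intro x hx
    exact hx.2
  exact hs (hle hx)

lemma IsDer.eq_lieSub {G : GLA Lc} {f g : Lc →ₗ[ℚ] Lc} {d : ℤ} (hf : IsDer G f d)
    (hg : IsDer G g d) {p : ℤ → Submodule ℚ Lc} (hp : ∀ i, p i ≤ G.grade i)
    (h0 : ∀ {i : ℤ} {x : Lc}, x ∈ p i → f x = g x) {x : Lc} (hx : x ∈ G.lieSub p) :
    f x = g x := by
  have h := (hf.add (hg.smul (-1))).zero_lieSub hp (x := x)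
    (fun hx => by simp [h0 hx]) hx
  simp only [LinearMap.add_apply, LinearMap.smul_apply] at h
  rw [neg_one_smul] at h
  exact sub_eq_zero.mp (by rw [sub_eq_add_neg]; exact h)

lemma Mag.real_mem_grade (G : GLA Lc) {P : ℤ → Submodule ℚ Lc} (hP : ∀ i, P i ≤ G.grade i)
    (A : Mag P) : A.real G ∈ G.grade A.deg := by
  induction A with
  | of i v hv => exact hP i hv
  | mul A B ha hb => exact G.br_mem ha hb

lemma Mag.real_mem_lieSub (G : GLA Lc) {P : ℤ → Submodule ℚ Lc}
    (A : Mag P) : A.real G ∈ G.lieSub P := by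
  induction A with
  | of i v hv => exact lieSub_of G hv
  | mul A B ha hb => exact lieSub_br G ha hb

lemma lieSub_mono (G : GLA Lc) {p q : ℤ → Submodule ℚ Lc} (h : ∀ i, p i ≤ q i) :
    G.lieSub p ≤ G.lieSub q := by
  apply sInf_le
  exact ⟨fun i x hx => lieSub_of G (h i hx), fun x hx y hy => lieSub_br G hx hy⟩

end Helpers

/-- Lemma 3.16.  In the dgl `(L₁, D)` built from minimal Quillen models
of 2-cones, for all `A, B, C ∈ 𝕄(V₀)` and all homogeneous `T ∈ 𝕃(W₀)`, the star product of
the Jacobiator `J(A,B,C) = A(BC) - (AB)C - (-1)^{|A||B|} B(AC)` with `T` satisfies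
`J(A,B,C) ⋆ T = (-1)^{|B|} D(σ_Ā σ_B̄ σ_C̄ (T))`. -/
theorem statement13
    {Lc : Type u} [AddCommGroup Lc] [Module ℚ Lc] (G : GLA Lc)
    (V0 V1 W0 W1 Sp : ℤ → Submodule ℚ Lc)
    -- the ambient free Lie algebra is reduced
    (hred : G.Reduced)
    (hV0 : ∀ i, V0 i ≤ G.grade i) (hV1 : ∀ i, V1 i ≤ G.grade i)
    (hW0 : ∀ i, W0 i ≤ G.grade i) (hW1 : ∀ i, W1 i ≤ G.grade i)
    (hSp : ∀ i, Sp i ≤ G.grade i)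
    -- the suspension `s(v ⊗ w)`, bilinear, of degree `|v|+|w|+1`; in `L₁` only
    -- `s(V₀⊗W₀) ⊕ s(V₁⊗W₀) ⊕ s(V₀⊗W₁)` is present
    (sus : Lc →ₗ[ℚ] Lc →ₗ[ℚ] Lc)
    (hsus00 : ∀ {i j : ℤ} {v w : Lc}, v ∈ V0 i → w ∈ W0 j → sus v w ∈ Sp (i + j + 1))
    (hsus10 : ∀ {i j : ℤ} {v w : Lc}, v ∈ V1 i → w ∈ W0 j → sus v w ∈ Sp (i + j + 1))
    (hsus01 : ∀ {i j : ℤ} {v w : Lc}, v ∈ V0 i → w ∈ W1 j → sus v w ∈ Sp (i + j + 1))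
    -- `L₁` is generated by `V ⊕ W ⊕ s(V₀⊗W₀) ⊕ s(V₁⊗W₀) ⊕ s(V₀⊗W₁)`
    (hgen : G.lieSub (fun i => V0 i ⊔ V1 i ⊔ W0 i ⊔ W1 i ⊔ Sp i) = ⊤)
    -- the derivations `σ_A` for homogeneous `A ∈ 𝕃(V ⊕ W)`
    (sg : ℤ → Lc → (Lc →ₗ[ℚ] Lc))
    (hsg_grade : ∀ {a : ℤ} {A : Lc}, A ∈ G.lieSub (fun i => V0 i ⊔ V1 i ⊔ W0 i ⊔ W1 i) →
      A ∈ G.grade a → ∀ {n : ℤ} {x : Lc}, x ∈ G.grade n → sg a A x ∈ G.grade (n + a + 1))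
    (hsg_der : ∀ {a : ℤ} {A : Lc}, A ∈ G.lieSub (fun i => V0 i ⊔ V1 i ⊔ W0 i ⊔ W1 i) →
      A ∈ G.grade a → ∀ {n : ℤ} (x y : Lc), x ∈ G.grade n →
      sg a A (G.br x y) = G.br (sg a A x) y + (-1 : ℚ) ^ ((a + 1) * n) • G.br x (sg a A y))
    (hsg_vw : ∀ {i j : ℤ} {v w : Lc}, v ∈ V0 i ⊔ V1 i → w ∈ W0 j → sg i v w = sus v w)
    (hsg_vw' : ∀ {i j : ℤ} {v w : Lc}, v ∈ V0 i → w ∈ W1 j → sg i v w = sus v w)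
    (hsg_wv : ∀ {i j : ℤ} {v w : Lc}, v ∈ V0 i ⊔ V1 i → w ∈ W0 j →
      sg j w v = (-1 : ℚ) ^ (i * j) • sus v w)
    (hsg_wv' : ∀ {i j : ℤ} {v w : Lc}, v ∈ V0 i → w ∈ W1 j →
      sg j w v = (-1 : ℚ) ^ (i * j) • sus v w)
    (hsg_vv : ∀ {i i' : ℤ} {v v' : Lc}, v ∈ V0 i ⊔ V1 i → v' ∈ V0 i' ⊔ V1 i' →
      sg i v v' = 0)
    (hsg_ww : ∀ {j j' : ℤ} {w w' : Lc}, w ∈ W0 j ⊔ W1 j → w' ∈ W0 j' ⊔ W1 j' →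
      sg j w w' = 0)
    (hsg_vS : ∀ {i k : ℤ} {v x : Lc}, v ∈ V0 i ⊔ V1 i → x ∈ Sp k → sg i v x = 0)
    (hsg_wS : ∀ {j k : ℤ} {w x : Lc}, w ∈ W0 j ⊔ W1 j → x ∈ Sp k → sg j w x = 0)
    (hsg_Av : ∀ {a : ℤ} {A : Lc}, A ∈ G.lieSub (fun i => V0 i ⊔ V1 i ⊔ W0 i ⊔ W1 i) →
      A ∈ G.grade a → ∀ {i : ℤ} {v : Lc}, v ∈ V0 i ⊔ V1 i →
      sg a A v = (-1 : ℚ) ^ (i * a) • sg i v A)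
    (hsg_Aw : ∀ {a : ℤ} {A : Lc}, A ∈ G.lieSub (fun i => V0 i ⊔ V1 i ⊔ W0 i ⊔ W1 i) →
      A ∈ G.grade a → ∀ {j : ℤ} {w : Lc}, w ∈ W0 j ⊔ W1 j →
      sg a A w = (-1 : ℚ) ^ (j * a) • sg j w A)
    (hsg_AS : ∀ {a : ℤ} {A : Lc}, A ∈ G.lieSub (fun i => V0 i ⊔ V1 i ⊔ W0 i ⊔ W1 i) →
      A ∈ G.grade a → ∀ {k : ℤ} {x : Lc}, x ∈ Sp k → sg a A x = 0)
    -- the degree `-1` derivation `D` of `L₁`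
    (D : Lc →ₗ[ℚ] Lc)
    (hD_grade : ∀ {i : ℤ} {x : Lc}, x ∈ G.grade i → D x ∈ G.grade (i - 1))
    (hD_der : ∀ {i : ℤ} (x y : Lc), x ∈ G.grade i →
      D (G.br x y) = G.br (D x) y + (-1 : ℚ) ^ ((-1 : ℤ) * i) • G.br x (D y))
    -- `D = ∂_V` on `V`, `D = ∂_W` on `W`, with `∂(V₀) = ∂(W₀) = 0`,
    -- `∂(V₁) ⊆ 𝕃(V₀)` and `∂(W₁) ⊆ 𝕃(W₀)`
    (hD_V0 : ∀ {i : ℤ} {v : Lc}, v ∈ V0 i → D v = 0)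
    (hD_W0 : ∀ {j : ℤ} {w : Lc}, w ∈ W0 j → D w = 0)
    (hD_V1 : ∀ {i : ℤ} {v : Lc}, v ∈ V1 i → D v ∈ G.lieSub V0)
    (hD_W1 : ∀ {j : ℤ} {w : Lc}, w ∈ W1 j → D w ∈ G.lieSub W0)
    -- minimality of the two Quillen models
    (hD_V1dec : ∀ {i : ℤ} {v : Lc}, v ∈ V1 i → D v ∈ G.dec)
    (hD_W1dec : ∀ {j : ℤ} {w : Lc}, w ∈ W1 j → D w ∈ G.dec)
    -- the value of `D` on the suspension generators
    (hD_sus00 : ∀ {i j : ℤ} {v w : Lc}, v ∈ V0 i → w ∈ W0 j → D (sus v w) = G.br v w)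
    (hD_sus10 : ∀ {i j : ℤ} {v w : Lc}, v ∈ V1 i → w ∈ W0 j →
      D (sus v w) = G.br v w - (-1 : ℚ) ^ ((i + 1) * j) • sg j w (D v))
    (hD_sus01 : ∀ {i j : ℤ} {v w : Lc}, v ∈ V0 i → w ∈ W1 j →
      D (sus v w) = G.br v w - (-1 : ℚ) ^ i • sg i v (D w))
    -- `(L₁, D)` is a dgl
    (hDD : ∀ x : Lc, D (D x) = 0)
 :
    ∀ (A B C : Mag V0) {t : ℤ} {T : Lc}, T ∈ G.lieSub W0 → T ∈ G.grade t →
      Mag.star G sg t (Mag.mul A (Mag.mul B C)) T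
        - Mag.star G sg t (Mag.mul (Mag.mul A B) C) T
        - (-1 : ℚ) ^ (Mag.deg A * Mag.deg B) • Mag.star G sg t (Mag.mul B (Mag.mul A C)) T
      = (-1 : ℚ) ^ (Mag.deg B) •
          D (sg (Mag.deg A) (Mag.real G A)
              (sg (Mag.deg B) (Mag.real G B) (sg (Mag.deg C) (Mag.real G C) T))) := by
  have signs : ∀ n : ℤ, (-1 : ℚ) ^ n = if Even n then 1 else -1 := neg_one_zpow_ite
  have hVle : ∀ i, V0 i ≤ V0 i ⊔ V1 i ⊔ W0 i ⊔ W1 i := fun i =>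
    le_sup_left.trans (le_sup_left.trans le_sup_left)
  have hWle : ∀ i, W0 i ≤ V0 i ⊔ V1 i ⊔ W0 i ⊔ W1 i := fun i =>
    le_sup_right.trans le_sup_left
  have hV01 : ∀ {i : ℤ} {v : Lc}, v ∈ V0 i → v ∈ V0 i ⊔ V1 i := fun h => Submodule.mem_sup_left h
  have hW01 : ∀ {i : ℤ} {v : Lc}, v ∈ W0 i → v ∈ W0 i ⊔ W1 i := fun h => Submodule.mem_sup_left h
  have bigV : ∀ {x : Lc}, x ∈ G.lieSub V0 →
      x ∈ G.lieSub (fun i => V0 i ⊔ V1 i ⊔ W0 i ⊔ W1 i) := fun h => lieSub_mono G hVle h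
  have bigW : ∀ {x : Lc}, x ∈ G.lieSub W0 →
      x ∈ G.lieSub (fun i => V0 i ⊔ V1 i ⊔ W0 i ⊔ W1 i) := fun h => lieSub_mono G hWle h
  have dD : IsDer G D (-1) := ⟨fun h => hD_grade h, fun x y h => hD_der x y h⟩
  have dS : ∀ {a : ℤ} {A : Lc}, A ∈ G.lieSub (fun i => V0 i ⊔ V1 i ⊔ W0 i ⊔ W1 i) →
      A ∈ G.grade a → IsDer G (sg a A) (a + 1) := fun h1 h2 =>
    ⟨fun {n x} h => by rw [← add_assoc]; exact hsg_grade h1 h2 h,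
      fun x y h => hsg_der h1 h2 x y h⟩
  have dSV : ∀ {a : ℤ} {A : Lc}, A ∈ G.lieSub V0 →
      A ∈ G.grade a → IsDer G (sg a A) (a + 1) := fun h1 h2 => dS (bigV h1) h2
  have dSw : ∀ {j : ℤ} {w : Lc}, w ∈ W0 j → IsDer G (sg j w) (j + 1) := fun hw =>
    dS (bigW (lieSub_of G hw)) (hW0 _ hw)
  -- `σ_A` kills `V₀`
  have sV0 : ∀ {a : ℤ} {A : Lc}, A ∈ G.lieSub V0 → A ∈ G.grade a →
      ∀ {i : ℤ} {v : Lc}, v ∈ V0 i → sg a A v = 0 := by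
    intro a A hA ha i v hv
    rw [hsg_Av (bigV hA) ha (hV01 hv)]
    have : sg i v A = 0 := (dSV (lieSub_of G hv) (hV0 _ hv)).zero_lieSub hV0
      (fun hx => hsg_vv (hV01 hv) (hV01 hx)) hA
    rw [this, smul_zero]
  have sLV0 : ∀ {a : ℤ} {A : Lc}, A ∈ G.lieSub V0 → A ∈ G.grade a →
      ∀ {x : Lc}, x ∈ G.lieSub V0 → sg a A x = 0 := fun hA ha _ hx =>
    (dSV hA ha).zero_lieSub hV0 (fun h => sV0 hA ha h) hx
  -- `D` kills `𝕃(V₀)` and `𝕃(W₀)`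
  have DLV : ∀ {x : Lc}, x ∈ G.lieSub V0 → D x = 0 := fun hx =>
    dD.zero_lieSub hV0 (fun h => hD_V0 h) hx
  have DLW : ∀ {x : Lc}, x ∈ G.lieSub W0 → D x = 0 := fun hx =>
    dD.zero_lieSub hW0 (fun h => hD_W0 h) hx
  -- `σ_C w = ± σ_w C`
  have sCw : ∀ {c : ℤ} {C : Lc}, C ∈ G.lieSub V0 → C ∈ G.grade c →
      ∀ {j : ℤ} {w : Lc}, w ∈ W0 j → sg c C w = (-1 : ℚ) ^ (j * c) • sg j w C :=
    fun hC hc _ _ hw => hsg_Aw (bigV hC) hc (hW01 hw)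
  -- derivations killing `V₀` and `s(V₀ ⊗ W₀)` kill `σ_C w`
  have L1 : ∀ {X : Lc →ₗ[ℚ] Lc} {d : ℤ}, IsDer G X d →
      (∀ {i : ℤ} {v : Lc}, v ∈ V0 i → X v = 0) →
      (∀ {i j : ℤ} {v w : Lc}, v ∈ V0 i → w ∈ W0 j → X (sus v w) = 0) →
      ∀ {c : ℤ} {C : Lc}, C ∈ G.lieSub V0 → C ∈ G.grade c →
      ∀ {j : ℤ} {w : Lc}, w ∈ W0 j → X (sg c C w) = 0 := by
    intro X d hX hXV hXS c C hC hc j w hw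
    rw [sCw hC hc hw, map_smul]
    have h1 := (hX.comm (dSw hw)).zero_lieSub hV0 (fun {i v} hv => by
      rw [gcomm_apply, hXV hv, hsg_wv (hV01 hv) hw, map_smul, hXS hv hw]; simp) hC
    have h2 : X C = 0 := hX.zero_lieSub hV0 hXV hC
    rw [gcomm_apply, h2, map_zero, smul_zero, sub_zero] at h1
    rw [h1, smul_zero]
  have L2 : ∀ {X : Lc →ₗ[ℚ] Lc} {d : ℤ}, IsDer G X d →
      (∀ {i : ℤ} {v : Lc}, v ∈ V0 i → X v = 0) →
      (∀ {i : ℤ} {v : Lc}, v ∈ W0 i → X v = 0) →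
      (∀ {i j : ℤ} {v w : Lc}, v ∈ V0 i → w ∈ W0 j → X (sus v w) = 0) →
      ∀ {c : ℤ} {C : Lc}, C ∈ G.lieSub V0 → C ∈ G.grade c →
      ∀ {T : Lc}, T ∈ G.lieSub W0 → X (sg c C T) = 0 := by
    intro X d hX hXV hXW hXS c C hC hc T hT
    have h1 := (hX.comm (dSV hC hc)).zero_lieSub hW0 (fun {i v} hv => by
      rw [gcomm_apply, hXW hv, L1 hX hXV hXS hC hc hv]; simp) hT
    have h2 : X T = 0 := hX.zero_lieSub hW0 hXW hT
    rwa [gcomm_apply, h2, map_zero, smul_zero, sub_zero] at h1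
  have sS : ∀ {a : ℤ} {A : Lc}, A ∈ G.lieSub V0 → A ∈ G.grade a →
      ∀ {i j : ℤ} {v w : Lc}, v ∈ V0 i → w ∈ W0 j → sg a A (sus v w) = 0 :=
    fun hA ha _ _ _ _ hv hw => hsg_AS (bigV hA) ha (hsus00 hv hw)
  have ssw : ∀ {b : ℤ} {B : Lc}, B ∈ G.lieSub V0 → B ∈ G.grade b →
      ∀ {c : ℤ} {C : Lc}, C ∈ G.lieSub V0 → C ∈ G.grade c →
      ∀ {j : ℤ} {w : Lc}, w ∈ W0 j → sg b B (sg c C w) = 0 :=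
    fun hB hb _ _ hC hc _ _ hw =>
      L1 (dSV hB hb) (fun h => sV0 hB hb h) (fun h hh => sS hB hb h hh) hC hc hw
  -- `D σ_C w = [C, w]`
  have Dsw : ∀ {c : ℤ} {C : Lc}, C ∈ G.lieSub V0 → C ∈ G.grade c →
      ∀ {j : ℤ} {w : Lc}, w ∈ W0 j → D (sg c C w) = G.br C w := by
    intro c C hC hc j w hw
    have h1 : gcomm D (sg j w) (-1) (j + 1) C = ((-1 : ℚ) • G.br w) C := by
      have hd := dD.comm (dSw hw)
      rw [show (-1 : ℤ) + (j + 1) = j by ring] at hd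
      refine hd.eq_lieSub ((isDer_ad G (hW0 _ hw)).smul (-1)) hV0 ?_ hC
      intro i v hv
      rw [gcomm_apply, hD_V0 hv, map_zero, smul_zero, sub_zero, hsg_wv (hV01 hv) hw, map_smul,
        hD_sus00 hv hw, LinearMap.smul_apply, G.antisymm (hW0 _ hw) (hV0 _ hv), mul_comm i j]
      simp
    rw [gcomm_apply, DLV hC, map_zero, smul_zero, sub_zero] at h1
    rw [sCw hC hc hw, map_smul, h1, LinearMap.smul_apply, G.antisymm hc (hW0 _ hw), mul_comm j c]
    simp
  have Dst : ∀ {c : ℤ} {C : Lc}, C ∈ G.lieSub V0 → C ∈ G.grade c →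
      ∀ {T : Lc}, T ∈ G.lieSub W0 → D (sg c C T) = G.br C T := by
    intro c C hC hc T hT
    have hd := dD.comm (dSV hC hc)
    rw [show (-1 : ℤ) + (c + 1) = c by ring] at hd
    have h1 := hd.eq_lieSub (isDer_ad G hc) hW0 (fun {j w} hw => by
      rw [gcomm_apply, hD_W0 hw, map_zero, smul_zero, sub_zero, Dsw hC hc hw]) hT
    rwa [gcomm_apply, DLW hT, map_zero, smul_zero, sub_zero] at h1
  -- `σ_A [B, x] = ± [B, σ_A x]`
  have sbr : ∀ {a : ℤ} {A : Lc}, A ∈ G.lieSub V0 → A ∈ G.grade a →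
      ∀ {b : ℤ} {B : Lc}, B ∈ G.lieSub V0 → B ∈ G.grade b → ∀ x : Lc,
      sg a A (G.br B x) = (-1 : ℚ) ^ ((a + 1) * b) • G.br B (sg a A x) := by
    intro a A hA ha b B hB hb x
    rw [(dSV hA ha).der B x hb, sLV0 hA ha hB]; simp
  -- `σ_[B,C] w`
  have sBCw : ∀ {b : ℤ} {B : Lc}, B ∈ G.lieSub V0 → B ∈ G.grade b →
      ∀ {c : ℤ} {C : Lc}, C ∈ G.lieSub V0 → C ∈ G.grade c →
      ∀ {j : ℤ} {w : Lc}, w ∈ W0 j → sg (b + c) (G.br B C) w =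
        (-1 : ℚ) ^ (j * c) • G.br (sg b B w) C + (-1 : ℚ) ^ b • G.br B (sg c C w) := by
    intro b B hB hb c C hC hc j w hw
    rw [sCw (lieSub_br G hB hC) (G.br_mem hb hc) hw, (dSw hw).der B C hb, sCw hB hb hw,
      sCw hC hc hw]
    simp only [map_smul, LinearMap.smul_apply, signs]
    by_cases h1 : Even b <;> by_cases h2 : Even c <;> by_cases h3 : Even j <;>
      simp only [Int.even_add, Int.even_mul, h1, h2, h3] <;> simp <;> abel
  -- the commutator `δ_A = [D, σ_A]` and `X = [δ_B, σ_C] + (-1)^b σ_[B,C]`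
  have key : ∀ {b : ℤ} {B : Lc}, B ∈ G.lieSub V0 → B ∈ G.grade b →
      ∀ {c : ℤ} {C : Lc}, C ∈ G.lieSub V0 → C ∈ G.grade c →
      ∃ X : Lc →ₗ[ℚ] Lc, IsDer G X (b + (c + 1)) ∧
        (∀ x, X x = gcomm (gcomm D (sg b B) (-1) (b + 1)) (sg c C) b (c + 1) x
          + (-1 : ℚ) ^ b • sg (b + c) (G.br B C) x) ∧
        (∀ {i : ℤ} {v : Lc}, v ∈ V0 i → X v = 0) ∧
        (∀ {i : ℤ} {v : Lc}, v ∈ W0 i → X v = 0) ∧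
        (∀ {i j : ℤ} {v w : Lc}, v ∈ V0 i → w ∈ W0 j → X (sus v w) = 0) := by
    intro b B hB hb c C hC hc
    have hd := dD.comm (dSV hB hb)
    rw [show (-1 : ℤ) + (b + 1) = b by ring] at hd
    have hBC := lieSub_br G hB hC
    have hbc := G.br_mem hb hc
    have hd3 := dSV hBC hbc
    rw [add_assoc] at hd3
    refine ⟨_, (hd.comm (dSV hC hc)).add (hd3.smul ((-1 : ℚ) ^ b)), fun x => rfl, ?_, ?_, ?_⟩
    · intro i v hv
      simp only [LinearMap.add_apply, LinearMap.smul_apply, gcomm_apply, sV0 hC hc hv,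
        sV0 hB hb hv, sV0 hBC hbc hv, hD_V0 hv, map_zero, smul_zero, sub_zero, add_zero]
    · intro j w hw
      simp only [LinearMap.add_apply, LinearMap.smul_apply, gcomm_apply, ssw hB hb hC hc hw,
        hD_W0 hw, Dsw hC hc hw, Dsw hB hb hw, map_zero, smul_zero, sub_zero, zero_sub,
        sbr hB hb hC hc, sbr hC hc hB hb, sBCw hB hb hC hc hw]
      rw [G.antisymm hc ((dSV hB hb).mem (hW0 _ hw))]
      simp only [signs]
      by_cases h1 : Even b <;> by_cases h2 : Even c <;> by_cases h3 : Even j <;>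
        simp only [Int.even_add, Int.even_mul, h1, h2, h3] <;> simp <;> abel
    · intro i j v w hv hw
      have hvL := lieSub_of G hv
      simp only [LinearMap.add_apply, LinearMap.smul_apply, gcomm_apply, sS hB hb hv hw,
        sS hC hc hv hw, sS hBC hbc hv hw, hD_sus00 hv hw, map_zero, smul_zero, sub_zero, zero_sub,
        sbr hB hb hvL (hV0 _ hv), map_neg, map_smul, sbr hC hc hvL (hV0 _ hv),
        ssw hC hc hB hb hw, neg_zero, add_zero]
  -- final assembly
  intro A B C t T hT ht
  have gA := Mag.real_mem_grade G hV0 A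
  have gB := Mag.real_mem_grade G hV0 B
  have gC := Mag.real_mem_grade G hV0 C
  have lA := Mag.real_mem_lieSub G A
  have lB := Mag.real_mem_lieSub G B
  have lC := Mag.real_mem_lieSub G C
  have starmem : ∀ E : Mag V0, Mag.star G sg t E T ∈ G.grade (t + E.deg + 2) := by
    intro E
    induction E with
    | of i v hv => exact Submodule.zero_mem _
    | mul E F hE hF =>
      have gE := Mag.real_mem_grade G hV0 E
      have gF := Mag.real_mem_grade G hV0 F
      have lE := Mag.real_mem_lieSub G E
      have lF := Mag.real_mem_lieSub G F
      have h1 := (dSV lE gE).mem ((dSV lF gF).mem ht)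
      have h2 := G.br_mem hE gF
      have h3 := G.br_mem gE hF
      rw [show t + (F.deg + 1) + (E.deg + 1) = t + (E.deg + F.deg) + 2 by ring] at h1
      rw [show t + E.deg + 2 + F.deg = t + (E.deg + F.deg) + 2 by ring] at h2
      rw [show E.deg + (t + F.deg + 2) = t + (E.deg + F.deg) + 2 by ring] at h3
      exact Submodule.add_mem _ (Submodule.add_mem _ (Submodule.smul_mem _ _ h1)
        (Submodule.smul_mem _ _ h2)) h3
  have mA := starmem A
  have mB := starmem B
  have mC := starmem C
  simp only [Mag.star, Mag.deg, Mag.real]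
  generalize Mag.star G sg t A T = X at *
  generalize Mag.star G sg t B T = Y at *
  generalize Mag.star G sg t C T = Z at *
  generalize Mag.real G A = aa at *
  generalize Mag.real G B = bb at *
  generalize Mag.real G C = cc at *
  generalize Mag.deg A = a at *
  generalize Mag.deg B = b at *
  generalize Mag.deg C = c at *
  -- commutation relations
  obtain ⟨X1, dX1, eX1, vX1, wX1, sX1⟩ := key lA gA lB gB
  obtain ⟨X2, dX2, eX2, vX2, wX2, sX2⟩ := key lA gA lC gC
  obtain ⟨X3, dX3, eX3, vX3, wX3, sX3⟩ := key lB gB lC gC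
  have r1 := L2 dX1 vX1 wX1 sX1 lC gC hT
  have r2 := dX2.zero_lieSub hW0 wX2 hT
  have r3 := dX3.zero_lieSub hW0 wX3 hT
  rw [eX1] at r1
  rw [eX2] at r2
  rw [eX3] at r3
  have rr2 := congrArg (sg b bb) r2
  have rr3 := congrArg (sg a aa) r3
  simp only [gcomm_apply, map_add, map_sub, map_smul, map_zero, Dst lA gA hT, Dst lB gB hT,
    Dst lC gC hT, DLW hT, smul_zero, sub_zero, sbr lA gA lB gB, sbr lA gA lC gC, sbr lB gB lA gA,
    sbr lB gB lC gC, sbr lC gC lA gA, sbr lC gC lB gB] at r1 rr2 rr3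
  -- Jacobi identities for the star terms
  have jX := G.jacobi cc mA gB
  have jY := G.jacobi cc gA mB
  have jZ := G.jacobi Z gA gB
  have aS := G.antisymm ((dSV lA gA).mem ((dSV lB gB).mem ht)) gC
  have r : ∀ {x y z : Lc}, x = 0 → y = 0 → z = 0 →
      -(-1 : ℚ) ^ b • (x + (-1 : ℚ) ^ (a * (b + 1)) • y - (-1 : ℚ) ^ a • z) = 0 := by
    intro x y z hx hy hz
    simp [hx, hy, hz]
  have r := r r1 rr2 rr3
  simp only [map_add, map_smul, LinearMap.add_apply, LinearMap.smul_apply]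
  rw [jX, jY, jZ, aS, ← sub_eq_zero]
  refine Eq.trans ?_ r
  clear r r1 r2 r3 rr2 rr3 jX jY jZ aS
  simp only [signs]
  by_cases h1 : Even a <;> by_cases h2 : Even b <;> by_cases h3 : Even c <;> by_cases h4 : Even t <;>
    simp only [Int.even_add, Int.even_mul, h1, h2, h3, h4] <;> simp <;> abel
end
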